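/- Let q be a prime power and let S and S′ be two distinct tangent splashes of ℓ∞ in PG(2,q³), both with centre T. Then the intersection S ∩ S′ is contained in an order-q-subline of ℓ∞ that contains T; in particular |S ∩ S′| ≤ q+1. -/

import Mathlib

/-!
The lines of a subplane of order `q` are the kernels of the nonzero functionals with coordinates
`u ∈ F³` in a suitable basis, so the splash consists of the points of `ℓ∞` killed by such a
functional. Take an affine coordinate on `ℓ∞` with `T` at infinity. The functionals that kill `T`
only contribute `T`. The others, normalised at `T`, form an affine `F`-plane, and sending each to
the coordinate of its zero on `ℓ∞` is an affine map over `F`. Tangency says that no nonzero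
functional vanishes on all of `ℓ∞`, which makes this map injective. Hence a tangent splash is an
affine `F`-plane of `K` together with `T`. Two distinct affine planes meet in a subset of an affine
line, and an affine `F`-line of `K` together with `T` is a subline.
-/

namespace TangentSplashPaper

open Projectivization

/-- The point set of the projective plane `PG(2,K)`. -/
abbrev PGPoint (K : Type*) [Field K] := Projectivization K (Fin 3 → K)

/-- `ℓ` is a line of `PG(2,K)`: the set of points lying in a fixed
2-dimensional linear subspace. -/
def IsLine {K : Type*} [Field K] (ℓ : Set (PGPoint K)) : Prop :=
  ∃ W : Submodule K (Fin 3 → K), Module.finrank K W = 2 ∧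
    ℓ = {P : PGPoint K | P.submodule ≤ W}

/-- The distinguished line `ℓ∞` of `PG(2,K)`: points whose last homogeneous
coordinate vanishes. -/
def linf (K : Type*) [Field K] : Set (PGPoint K) := {P : PGPoint K | P.rep 2 = 0}

/-- The homography of `PG(2,K)` induced by a linear automorphism of `K³`;
as maps of point sets, these are exactly the elements of `PGL(3,K)`. -/
def hmap {K : Type*} [Field K] (f : (Fin 3 → K) ≃ₗ[K] (Fin 3 → K)) :
    PGPoint K → PGPoint K :=
  Projectivization.map f.toLinearMap f.injective

/-- The base subplane `PG(2,F)`: points admitting homogeneous coordinates in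
the subfield `F`. -/
def basePlane (F K : Type*) [Field F] [Field K] [Algebra F K] : Set (PGPoint K) :=
  {P : PGPoint K | ∃ v : Fin 3 → K, ∃ hv : v ≠ 0, P = Projectivization.mk K v hv ∧
    ∀ i, v i ∈ (algebraMap F K).range}

/-- An order-`q`-subplane of `PG(2,K)` (`q = |F|`): an image of `PG(2,F)`
under a homography. -/
def IsSubplane (F : Type*) {K : Type*} [Field F] [Field K] [Algebra F K]
    (S : Set (PGPoint K)) : Prop :=
  ∃ f : (Fin 3 → K) ≃ₗ[K] (Fin 3 → K), S = hmap f '' basePlane F K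

/-- An order-`q`-subline of `PG(2,K)`: the intersection of an order-`q`-subplane
with a line of `PG(2,K)` meeting it in `q+1` points. -/
def IsSubline (F : Type*) {K : Type*} [Field F] [Field K] [Algebra F K] (q : ℕ)
    (b : Set (PGPoint K)) : Prop :=
  ∃ S ℓ : Set (PGPoint K), IsSubplane F S ∧ IsLine ℓ ∧
    (S ∩ ℓ).ncard = q + 1 ∧ b = S ∩ ℓ

/-- The splash of a subplane `π` on `ℓ∞`: all points of `ℓ∞` lying on a line
of `PG(2,K)` spanned by two points of `π`. -/
def splash {K : Type*} [Field K] (π : Set (PGPoint K)) : Set (PGPoint K) :=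
  {X : PGPoint K | X ∈ linf K ∧ ∃ P Q : PGPoint K, P ∈ π ∧ Q ∈ π ∧ P ≠ Q ∧
    ∃ ℓ : Set (PGPoint K), IsLine ℓ ∧ P ∈ ℓ ∧ Q ∈ ℓ ∧ X ∈ ℓ}

/-- `S` is a tangent splash of `ℓ∞` with centre `T`: `S` is the splash of some
order-`q`-subplane meeting `ℓ∞` exactly in the point `T`. -/
def IsTangentSplash (F : Type*) {K : Type*} [Field F] [Field K] [Algebra F K]
    (S : Set (PGPoint K)) (T : PGPoint K) : Prop :=
  ∃ π : Set (PGPoint K), IsSubplane F π ∧ π ∩ linf K = {T} ∧ S = splash π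

/-- The set `t_P`: points of `ℓ∞` lying on the extension of a line of the
subplane `π` through the point `P` (lines of `π` are the lines of `PG(2,K)`
meeting `π` in `q+1` points). -/
def pencilTrace {K : Type*} [Field K] (q : ℕ) (π : Set (PGPoint K))
    (P : PGPoint K) : Set (PGPoint K) :=
  {X : PGPoint K | X ∈ linf K ∧ ∃ ℓ : Set (PGPoint K), IsLine ℓ ∧ P ∈ ℓ ∧
    (π ∩ ℓ).ncard = q + 1 ∧ X ∈ ℓ}

open scoped LinearAlgebra.Projectivization

section Chart

variable {K V : Type*} [Field K] [AddCommGroup V] [Module K V] {t s : V}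

lemma left_ne_zero (h : LinearIndependent K ![t, s]) : t ≠ 0 := h.ne_zero 0

lemma smul_add_ne_zero (h : LinearIndependent K ![t, s]) (z : K) : z • t + s ≠ 0 := fun hz =>
  one_ne_zero (LinearIndependent.pair_iff.1 h z 1 (by rwa [one_smul])).2

/-- The point with affine coordinate `z` on the projective line spanned by `t` and `s`, where `t`
is the point at infinity and `s` is the origin. -/
def chart (h : LinearIndependent K ![t, s]) (z : K) : ℙ K V :=
  mk K (z • t + s) (smul_add_ne_zero h z)

/-- The set of points with affine coordinate in `A` on the projective line spanned by `t` and `s`,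
completed by the point at infinity `t`. -/
def projectiveClosure (h : LinearIndependent K ![t, s]) (A : Set K) : Set (ℙ K V) :=
  insert (mk K t (left_ne_zero h)) (chart h '' A)

lemma chart_injective (h : LinearIndependent K ![t, s]) : Function.Injective (chart h) := by
  intro z w hzw
  obtain ⟨a, ha⟩ := (mk_eq_mk_iff' ..).1 hzw
  obtain ⟨hz, ha1⟩ := LinearIndependent.pair_iff.1 h (a * w - z) (a - 1)
    (by linear_combination (norm := module) ha)
  rw [sub_eq_zero.1 ha1, one_mul] at hz
  exact (sub_eq_zero.1 hz).symm

lemma mk_notMem_chart_image (h : LinearIndependent K ![t, s]) (A : Set K) :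
    mk K t (left_ne_zero h) ∉ chart h '' A := by
  rintro ⟨z, -, hz⟩
  obtain ⟨a, ha⟩ := (mk_eq_mk_iff' ..).1 hz
  exact one_ne_zero
    (LinearIndependent.pair_iff.1 h (z - a) 1 (by linear_combination (norm := module) -ha)).2

lemma projectiveClosure_mono (h : LinearIndependent K ![t, s]) {A B : Set K} (hAB : A ⊆ B) :
    projectiveClosure h A ⊆ projectiveClosure h B :=
  Set.insert_subset_insert (Set.image_mono hAB)

lemma projectiveClosure_inter (h : LinearIndependent K ![t, s]) (A B : Set K) :
    projectiveClosure h (A ∩ B) = projectiveClosure h A ∩ projectiveClosure h B := by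
  simp only [projectiveClosure, Set.image_inter (chart_injective h), Set.insert_inter_distrib]

lemma ncard_projectiveClosure (h : LinearIndependent K ![t, s]) {A : Set K} (hA : A.Finite) :
    (projectiveClosure h A).ncard = A.ncard + 1 := by
  rw [projectiveClosure, Set.ncard_insert_of_notMem (mk_notMem_chart_image h A) (hA.image _),
    Set.ncard_image_of_injective _ (chart_injective h)]

lemma projectivization_span_pair (h : LinearIndependent K ![t, s]) :
    ((Submodule.span K {t, s}).projectivization : Set (ℙ K V)) =
      projectiveClosure h Set.univ := by
  ext P
  induction P using ind with | h v hv =>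
  simp only [SetLike.mem_coe, Submodule.mk_mem_projectivization_iff, Submodule.mem_span_pair,
    projectiveClosure, chart, Set.image_univ, Set.mem_insert_iff, Set.mem_range,
    mk_eq_mk_iff']
  constructor
  · rintro ⟨a, b, rfl⟩
    rcases eq_or_ne b 0 with rfl | hb
    · exact .inl ⟨a, by simp⟩
    · refine .inr ⟨a / b, b⁻¹, ?_⟩
      match_scalars <;> field_simp
  · rintro (⟨a, rfl⟩ | ⟨z, a, ha⟩)
    · exact ⟨a, 0, by simp⟩
    · have ha0 : a ≠ 0 := by
        rintro rfl
        exact smul_add_ne_zero h z (by rw [← ha, zero_smul])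
      refine ⟨a⁻¹ * z, a⁻¹, ?_⟩
      rw [mul_smul, ← smul_add, ← ha, inv_smul_smul₀ ha0]

lemma eq_projectiveClosure_preimage_chart (h : LinearIndependent K ![t, s]) {X : Set (ℙ K V)}
    (hX : X ⊆ projectiveClosure h Set.univ) (ht : mk K t (left_ne_zero h) ∈ X) :
    X = projectiveClosure h (chart h ⁻¹' X) := by
  refine subset_antisymm (fun P hP => ?_) (Set.insert_subset ht (Set.image_preimage_subset _ _))
  rcases hX hP with rfl | ⟨z, -, rfl⟩
  · exact Set.mem_insert _ _
  · exact Set.mem_insert_of_mem _ (Set.mem_image_of_mem _ hP)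

lemma chart_mem_projectiveClosure_iff (h : LinearIndependent K ![t, s]) {A : Set K} {z : K} :
    chart h z ∈ projectiveClosure h A ↔ z ∈ A := by
  rw [projectiveClosure, Set.mem_insert_iff, (chart_injective h).mem_set_image]
  refine or_iff_right fun hz => mk_notMem_chart_image h Set.univ ?_
  exact ⟨z, Set.mem_univ z, hz⟩

lemma linearIndependent_sub_smul_smul_add (h : LinearIndependent K ![t, s]) {z₁ z₂ : K}
    (hz : z₁ ≠ z₂) : LinearIndependent K ![(z₂ - z₁) • t, z₁ • t + s] := by
  refine LinearIndependent.pair_iff.2 fun a b hab => ?_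
  obtain ⟨ha, rfl⟩ := LinearIndependent.pair_iff.1 h (a * (z₂ - z₁) + b * z₁) b
    (by linear_combination (norm := module) hab)
  rw [zero_mul, add_zero, mul_eq_zero] at ha
  exact ⟨ha.resolve_right (sub_ne_zero.2 hz.symm), rfl⟩

lemma projectiveClosure_image_lineMap (h : LinearIndependent K ![t, s]) {z₁ z₂ : K}
    (hz : z₁ ≠ z₂) (A : Set K) :
    projectiveClosure h (AffineMap.lineMap (k := K) z₁ z₂ '' A) =
      projectiveClosure (linearIndependent_sub_smul_smul_add h hz) A := by
  rw [projectiveClosure, projectiveClosure, Set.image_image]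
  congr 1
  · exact (mk_eq_mk_iff' ..).2 ⟨(z₂ - z₁)⁻¹, inv_smul_smul₀ (sub_ne_zero.2 hz.symm) t⟩
  · refine Set.image_congr fun r _ => ?_
    unfold chart
    congr 1
    rw [AffineMap.lineMap_apply_module']
    module

end Chart

section AffineGeometry

lemma collinear_inf_of_finrank_direction_eq_two {k V P : Type*} [DivisionRing k] [AddCommGroup V]
    [Module k V] [AddTorsor V P] {A B : AffineSubspace k P}
    (hA : Module.finrank k A.direction = 2) (hB : Module.finrank k B.direction = 2)
    (hAB : A ≠ B) : Collinear k ((A ⊓ B : AffineSubspace k P) : Set P) := by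
  have : FiniteDimensional k A.direction := .of_finrank_eq_succ hA
  have : FiniteDimensional k B.direction := .of_finrank_eq_succ hB
  rcases (A ⊓ B).eq_bot_or_nonempty with hbot | ⟨p, hp⟩
  · rw [hbot, AffineSubspace.bot_coe]
    exact collinear_empty k P
  have hdir := AffineSubspace.direction_inf_of_mem_inf hp
  have hlt : A.direction ⊓ B.direction < A.direction := by
    refine inf_le_left.lt_of_ne fun hle => hAB ?_
    exact AffineSubspace.ext_of_direction_eq
      (Submodule.eq_of_le_of_finrank_eq (inf_eq_left.1 hle) (hA.trans hB.symm)) ⟨p, hp⟩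
  have hfin : FiniteDimensional k (vectorSpan k ((A ⊓ B : AffineSubspace k P) : Set P)) := by
    rw [← AffineSubspace.direction_eq_vectorSpan, hdir]
    exact Submodule.finiteDimensional_of_le inf_le_left
  rw [collinear_iff_finrank_le_one, ← AffineSubspace.direction_eq_vectorSpan, hdir]
  have := Submodule.finrank_lt_finrank_of_lt hlt
  omega

lemma exists_ne_subset_line_of_collinear {k V P : Type*} [DivisionRing k] [AddCommGroup V]
    [Nontrivial V] [Module k V] [AddTorsor V P] {X : Set P} (hX : Collinear k X) :
    ∃ p₁ p₂ : P, p₁ ≠ p₂ ∧ X ⊆ line[k, p₁, p₂] := by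
  obtain ⟨p, v, hv⟩ := (collinear_iff_exists_forall_eq_smul_vadd X).1 hX
  obtain ⟨w, hw, hXw⟩ : ∃ w : V, w ≠ 0 ∧ ∀ x ∈ X, ∃ r : k, x = r • w +ᵥ p := by
    rcases eq_or_ne v 0 with rfl | hv0
    · obtain ⟨w, hw⟩ := exists_ne (0 : V)
      exact ⟨w, hw, fun x hx => ⟨0, by simpa using (hv x hx).choose_spec⟩⟩
    · exact ⟨v, hv0, hv⟩
  refine ⟨p, w +ᵥ p, fun h => hw (vadd_right_cancel p (h.symm.trans (zero_vadd V p).symm)), ?_⟩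
  intro x hx
  obtain ⟨r, rfl⟩ := hXw x hx
  exact vadd_left_mem_affineSpan_pair.2 ⟨r, by rw [vadd_vsub]⟩

lemma exists_affineSubspace_forall_mem_iff_smul_eq {k M N : Type*} [Field k]
    [AddCommGroup M] [Module k M] [FiniteDimensional k M] [AddCommGroup N] [Module k N]
    {φ : Module.Dual k M} {g : M →ₗ[k] N}
    (hφ : φ ≠ 0) (hg : Disjoint (LinearMap.ker φ) (LinearMap.ker g)) :
    ∃ A : AffineSubspace k N, Module.finrank k A.direction + 1 = Module.finrank k M ∧
      ∀ z, z ∈ A ↔ ∃ u ≠ 0, φ u • z = g u := by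
  -- The affine space is the image under `g` of the hyperplane `φ = 1`, into which every `u` with
  -- `φ u ≠ 0` can be rescaled.
  obtain ⟨u₁, hu₁⟩ := LinearMap.surjective hφ 1
  refine ⟨.mk' (g u₁) ((LinearMap.ker φ).map g), ?_, fun z => ?_⟩
  · rw [AffineSubspace.direction_mk', ← Module.Dual.finrank_ker_add_one_of_ne_zero hφ]
    rw [← LinearMap.range_domRestrict, LinearMap.finrank_range_of_inj]
    exact LinearMap.injective_domRestrict_iff.2 hg
  · rw [AffineSubspace.mem_mk', vsub_eq_sub, Submodule.mem_map]
    constructor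
    · rintro ⟨w, hw, hwz⟩
      have hφw : φ (w + u₁) = 1 := by rw [map_add, LinearMap.mem_ker.1 hw, hu₁, zero_add]
      refine ⟨w + u₁, fun h0 => ?_, ?_⟩
      · rw [h0, map_zero] at hφw
        exact zero_ne_one hφw
      · rw [hφw, one_smul, map_add, hwz, sub_add_cancel]
    · rintro ⟨u, hu, huz⟩
      have hφu : φ u ≠ 0 := fun h0 =>
        hu (Submodule.disjoint_def.1 hg u h0 (by rw [LinearMap.mem_ker, ← huz, h0, zero_smul]))
      refine ⟨(φ u)⁻¹ • u - u₁, ?_, ?_⟩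
      · rw [LinearMap.mem_ker, map_sub, map_smul, smul_eq_mul, inv_mul_cancel₀ hφu, hu₁, sub_self]
      · rw [map_sub, map_smul, ← huz, inv_smul_smul₀ hφu]

end AffineGeometry

section Lines

variable {K : Type*} [Field K]

lemma isLine_iff {ℓ : Set (PGPoint K)} :
    IsLine ℓ ↔ ∃ W : Submodule K (Fin 3 → K), Module.finrank K W = 2 ∧ ℓ = W.projectivization := by
  refine exists_congr fun W => and_congr_right fun _ => ?_
  rw [show (W.projectivization : Set (PGPoint K)) = {P | P.submodule ≤ W} from
    Set.ext fun P => W.mem_projectivization_iff_submodule_le P]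

lemma IsLine.eq_of_mem {ℓ m : Set (PGPoint K)} (hℓ : IsLine ℓ) (hm : IsLine m)
    {P Q : PGPoint K} (hPQ : P ≠ Q) (hPℓ : P ∈ ℓ) (hQℓ : Q ∈ ℓ) (hPm : P ∈ m) (hQm : Q ∈ m) :
    ℓ = m := by
  obtain ⟨W, hW, rfl⟩ := isLine_iff.1 hℓ
  obtain ⟨W', hW', rfl⟩ := isLine_iff.1 hm
  rw [line_unique hPQ W W' hW hW' hPℓ hQℓ hPm hQm]

lemma isLine_projectiveClosure_univ {t s : Fin 3 → K} (h : LinearIndependent K ![t, s]) :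
    IsLine (projectiveClosure h Set.univ) := by
  refine isLine_iff.2 ⟨Submodule.span K {t, s}, ?_, (projectivization_span_pair h).symm⟩
  rw [← Matrix.range_cons_cons_empty t s ![], finrank_span_eq_card h, Fintype.card_fin]

lemma IsLine.exists_eq_projectiveClosure_univ {ℓ : Set (PGPoint K)} (hℓ : IsLine ℓ)
    {t : Fin 3 → K} {ht : t ≠ 0} (htℓ : mk K t ht ∈ ℓ) :
    ∃ (s : Fin 3 → K) (h : LinearIndependent K ![t, s]), ℓ = projectiveClosure h Set.univ := by
  obtain ⟨W, hW, rfl⟩ := isLine_iff.1 hℓ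
  obtain ⟨⟨s, hsW⟩, hs⟩ := exists_linearIndependent_pair_of_one_lt_finrank (R := K)
    (one_lt_two.trans_eq hW.symm) (x := (⟨t, htℓ⟩ : W)) fun h0 => ht (congrArg Subtype.val h0)
  have h : LinearIndependent K ![t, s] := by
    simpa only [LinearIndependent.pair_iff, Subtype.ext_iff, Submodule.coe_add, Submodule.coe_smul,
      Submodule.coe_zero] using hs
  have hspan : W = Submodule.span K {t, s} := line_unique' ht (h.ne_zero 1) h W hW htℓ hsW
  exact ⟨s, h, by rw [hspan, projectivization_span_pair h]⟩

/-- The line with homogeneous equation `φ = 0`. -/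
def dualLine (φ : Module.Dual K (Fin 3 → K)) : Set (PGPoint K) :=
  (LinearMap.ker φ).projectivization

lemma mk_mem_dualLine {φ : Module.Dual K (Fin 3 → K)} {v : Fin 3 → K} {hv : v ≠ 0} :
    mk K v hv ∈ dualLine φ ↔ φ v = 0 :=
  Iff.rfl

lemma chart_mem_dualLine {φ : Module.Dual K (Fin 3 → K)} {t s : Fin 3 → K}
    (h : LinearIndependent K ![t, s]) {z : K} :
    chart h z ∈ dualLine φ ↔ z * φ t + φ s = 0 := by
  rw [chart, mk_mem_dualLine, map_add, map_smul, smul_eq_mul]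

lemma isLine_dualLine {φ : Module.Dual K (Fin 3 → K)} (hφ : φ ≠ 0) : IsLine (dualLine φ) := by
  refine isLine_iff.2 ⟨LinearMap.ker φ, ?_, rfl⟩
  have := Module.Dual.finrank_ker_add_one_of_ne_zero hφ
  rw [Module.finrank_fin_fun] at this
  omega

lemma dualLine_eq_projectiveClosure_univ {φ : Module.Dual K (Fin 3 → K)} (hφ : φ ≠ 0)
    {t s : Fin 3 → K} (h : LinearIndependent K ![t, s]) (ht : φ t = 0) (hs : φ s = 0) :
    dualLine φ = projectiveClosure h Set.univ := by
  refine (isLine_dualLine hφ).eq_of_mem (isLine_projectiveClosure_univ h) (P := chart h 0)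
    (fun h0 => mk_notMem_chart_image h Set.univ ⟨0, Set.mem_univ _, h0⟩) ?_ ht ?_ (.inl rfl)
  · rw [chart_mem_dualLine, ht, hs, mul_zero, add_zero]
  · exact .inr ⟨0, Set.mem_univ _, rfl⟩

lemma isLine_linf : IsLine (linf K) := by
  have hlinf : linf K = dualLine (LinearMap.proj 2) := by
    ext P
    conv_rhs => rw [← mk_rep P, mk_mem_dualLine]
    rfl
  rw [hlinf]
  refine isLine_dualLine fun h => one_ne_zero (α := K) ?_
  simpa using LinearMap.congr_fun h 1

end Lines

section Subplanes

variable {F K : Type*} [Field F] [Field K] [Algebra F K] {f : (Fin 3 → K) ≃ₗ[K] (Fin 3 → K)}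

lemma mk_mem_hmap_image_basePlane {v : Fin 3 → K} {hv : v ≠ 0} :
    mk K v hv ∈ hmap f '' basePlane F K ↔
      ∃ (k : K) (u : Fin 3 → F), v = k • f (algebraMap F K ∘ u) := by
  constructor
  · rintro ⟨_, ⟨w, hw, rfl, hwF⟩, hwv⟩
    choose u hu using hwF
    obtain rfl : algebraMap F K ∘ u = w := funext hu
    rw [hmap, map_mk, eq_comm, mk_eq_mk_iff'] at hwv
    obtain ⟨k, hk⟩ := hwv
    exact ⟨k, u, hk.symm⟩
  · rintro ⟨k, u, rfl⟩
    have hu : algebraMap F K ∘ u ≠ 0 := fun h0 => hv (by rw [h0, map_zero, smul_zero])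
    refine ⟨mk K _ hu, ⟨_, hu, rfl, fun i => ⟨u i, rfl⟩⟩, ?_⟩
    rw [hmap, map_mk, eq_comm, mk_eq_mk_iff']
    exact ⟨k, rfl⟩

variable (F f) in
/-- The functional on `K³` with coordinates `u` in the basis dual to the image under `f` of the
standard basis. For `u ≠ 0`, its kernel is an extended line of the subplane
`hmap f '' basePlane F K`, and every extended line arises in this way. -/
def subplaneDual : (Fin 3 → F) →ₗ[F] Module.Dual K (Fin 3 → K) :=
  Fintype.linearCombination F fun i => LinearMap.proj i ∘ₗ f.symm.toLinearMap

lemma subplaneDual_apply_map_algebraMap (u w : Fin 3 → F) :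
    subplaneDual F f u (f (algebraMap F K ∘ w)) = algebraMap F K (u ⬝ᵥ w) := by
  simp [subplaneDual, Fintype.linearCombination_apply, dotProduct, Algebra.smul_def]

lemma subplaneDual_ne_zero {u : Fin 3 → F} (hu : u ≠ 0) : subplaneDual F f u ≠ 0 := by
  refine fun h0 => hu (dotProduct_eq_zero u fun w => ?_)
  rw [← map_eq_zero (algebraMap F K), ← subplaneDual_apply_map_algebraMap (f := f), h0,
    LinearMap.zero_apply]

lemma exists_ne_zero_dotProduct_eq_zero (p r : Fin 3 → F) :
    ∃ u ≠ 0, u ⬝ᵥ p = 0 ∧ u ⬝ᵥ r = 0 := by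
  obtain ⟨u, hu, hu0⟩ := Submodule.exists_mem_ne_zero_of_ne_bot
    (LinearMap.ker_ne_bot_of_finrank_lt
      (f := (dotProductEquiv F (Fin 3) p).prod (dotProductEquiv F (Fin 3) r)) (by simp))
  obtain ⟨hp, hr⟩ := Prod.ext_iff.1 (LinearMap.mem_ker.1 hu)
  exact ⟨u, hu0, (dotProduct_comm u p).trans hp, (dotProduct_comm u r).trans hr⟩

lemma exists_eq_dualLine_subplaneDual {P Q : PGPoint K} (hP : P ∈ hmap f '' basePlane F K)
    (hQ : Q ∈ hmap f '' basePlane F K) (hPQ : P ≠ Q) {ℓ : Set (PGPoint K)} (hℓ : IsLine ℓ)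
    (hPℓ : P ∈ ℓ) (hQℓ : Q ∈ ℓ) : ∃ u ≠ 0, ℓ = dualLine (subplaneDual F f u) := by
  induction P using ind with | h v hv =>
  induction Q using ind with | h w hw =>
  obtain ⟨k, p, rfl⟩ := mk_mem_hmap_image_basePlane.1 hP
  obtain ⟨l, r, rfl⟩ := mk_mem_hmap_image_basePlane.1 hQ
  obtain ⟨u, hu, hup, hur⟩ := exists_ne_zero_dotProduct_eq_zero p r
  refine ⟨u, hu, hℓ.eq_of_mem (isLine_dualLine (subplaneDual_ne_zero hu)) hPQ hPℓ hQℓ ?_ ?_⟩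
  · rw [mk_mem_dualLine, map_smul, subplaneDual_apply_map_algebraMap, hup, map_zero, smul_zero]
  · rw [mk_mem_dualLine, map_smul, subplaneDual_apply_map_algebraMap, hur, map_zero, smul_zero]

lemma exists_linearIndependent_pair_dotProduct_eq_zero (u : Fin 3 → F) :
    ∃ p r : Fin 3 → F, LinearIndependent F ![p, r] ∧ u ⬝ᵥ p = 0 ∧ u ⬝ᵥ r = 0 := by
  let φ : Module.Dual F (Fin 3 → F) := dotProductEquiv F (Fin 3) u
  have hrank : 2 ≤ Module.finrank F (LinearMap.ker φ) := by
    have hsum := LinearMap.finrank_range_add_finrank_ker φ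
    have hrange := Submodule.finrank_le (LinearMap.range φ)
    rw [Module.finrank_fin_fun] at hsum
    rw [Module.finrank_self] at hrange
    omega
  obtain ⟨p, hp⟩ := exists_linearIndependent_of_le_finrank hrank
  refine ⟨p 0, p 1, ?_, (p 0).2, (p 1).2⟩
  have hpair : ![(p 0 : Fin 3 → F), p 1] = (LinearMap.ker φ).subtype ∘ p :=
    funext (Fin.forall_fin_two.2 ⟨rfl, rfl⟩)
  exact hpair ▸ hp.map' _ (Submodule.ker_subtype _)

lemma exists_ne_mem_dualLine_subplaneDual (u : Fin 3 → F) :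
    ∃ P ∈ hmap f '' basePlane F K, ∃ Q ∈ hmap f '' basePlane F K, P ≠ Q ∧
      P ∈ dualLine (subplaneDual F f u) ∧ Q ∈ dualLine (subplaneDual F f u) := by
  obtain ⟨p, r, hpr, hup, hur⟩ := exists_linearIndependent_pair_dotProduct_eq_zero u
  have hind : LinearIndependent K ![f (algebraMap F K ∘ p), f (algebraMap F K ∘ r)] := by
    have hpair : (fun i => algebraMap F K ∘ ![p, r] i) =
        ![algebraMap F K ∘ p, algebraMap F K ∘ r] := funext (Fin.forall_fin_two.2 ⟨rfl, rfl⟩)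
    have hK := linearIndependent_algebraMap_comp_iff (S := K).2 hpr
    simpa only [hpair, LinearIndependent.pair_iff, ← map_smul, ← map_add, f.map_eq_zero_iff]
      using hK
  have hp0 : f (algebraMap F K ∘ p) ≠ 0 := hind.ne_zero 0
  have hr0 : f (algebraMap F K ∘ r) ≠ 0 := hind.ne_zero 1
  refine ⟨mk K _ hp0, mk_mem_hmap_image_basePlane.2 ⟨1, p, (one_smul _ _).symm⟩,
    mk K _ hr0, mk_mem_hmap_image_basePlane.2 ⟨1, r, (one_smul _ _).symm⟩, ?_, ?_, ?_⟩
  · rwa [← independent_pair_iff_ne, independent_mk_iff_LinearIndependent]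
  · rw [mk_mem_dualLine, subplaneDual_apply_map_algebraMap, hup, map_zero]
  · rw [mk_mem_dualLine, subplaneDual_apply_map_algebraMap, hur, map_zero]

lemma mem_splash_iff {X : PGPoint K} : X ∈ splash (hmap f '' basePlane F K) ↔
    X ∈ linf K ∧ ∃ u ≠ 0, X ∈ dualLine (subplaneDual F f u) := by
  refine and_congr_right fun _ => ⟨?_, ?_⟩
  · rintro ⟨P, Q, hP, hQ, hPQ, ℓ, hℓ, hPℓ, hQℓ, hXℓ⟩
    obtain ⟨u, hu, rfl⟩ := exists_eq_dualLine_subplaneDual hP hQ hPQ hℓ hPℓ hQℓ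
    exact ⟨u, hu, hXℓ⟩
  · rintro ⟨u, hu, hX⟩
    obtain ⟨P, hP, Q, hQ, hPQ, hPu, hQu⟩ := exists_ne_mem_dualLine_subplaneDual (K := K) u
    exact ⟨P, Q, hP, hQ, hPQ, _, isLine_dualLine (subplaneDual_ne_zero hu), hPu, hQu, hX⟩

lemma mem_splash_of_mem_inter_linf {X : PGPoint K} (hX : X ∈ hmap f '' basePlane F K ∩ linf K) :
    X ∈ splash (hmap f '' basePlane F K) := by
  obtain ⟨hXf, hXl⟩ := hX
  refine mem_splash_iff.2 ⟨hXl, ?_⟩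
  induction X using ind with | h v hv =>
  obtain ⟨k, w, rfl⟩ := mk_mem_hmap_image_basePlane.1 hXf
  obtain ⟨u, hu, huw, -⟩ := exists_ne_zero_dotProduct_eq_zero w w
  refine ⟨u, hu, ?_⟩
  rw [mk_mem_dualLine, map_smul, subplaneDual_apply_map_algebraMap, huw, map_zero, smul_zero]

lemma dualLine_subplaneDual_ne_of_inter_eq_singleton {ℓ : Set (PGPoint K)} {T : PGPoint K}
    (hT : hmap f '' basePlane F K ∩ ℓ = {T}) (u : Fin 3 → F) :
    dualLine (subplaneDual F f u) ≠ ℓ := by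
  rintro rfl
  obtain ⟨P, hP, Q, hQ, hPQ, hPu, hQu⟩ := exists_ne_mem_dualLine_subplaneDual (f := f) u
  exact hPQ ((hT.subset ⟨hP, hPu⟩).trans (hT.subset ⟨hQ, hQu⟩).symm)

lemma IsTangentSplash.exists_affineSubspace {S : Set (PGPoint K)} {t s : Fin 3 → K}
    (h : LinearIndependent K ![t, s]) (hlinf : linf K = projectiveClosure h Set.univ)
    (hS : IsTangentSplash F S (mk K t (left_ne_zero h))) :
    ∃ A : AffineSubspace F K, Module.finrank F A.direction = 2 ∧ S = projectiveClosure h A := by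
  obtain ⟨_, ⟨f, rfl⟩, hT, rfl⟩ := hS
  have htT : mk K t (left_ne_zero h) ∈ hmap f '' basePlane F K ∩ linf K := hT.superset rfl
  obtain ⟨k, u₀, hk⟩ := mk_mem_hmap_image_basePlane.1 htT.1
  let φ : Module.Dual F (Fin 3 → F) := dotProductEquiv F (Fin 3) u₀
  let g : (Fin 3 → F) →ₗ[F] K :=
    -k⁻¹ • (LinearMap.applyₗ s).restrictScalars F ∘ₗ subplaneDual F f
  have hk0 : k ≠ 0 := by
    rintro rfl
    exact left_ne_zero h (hk.trans (zero_smul ..))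
  have hDt (u : Fin 3 → F) : subplaneDual F f u t = k * algebraMap F K (φ u) := by
    rw [hk, map_smul, subplaneDual_apply_map_algebraMap, dotProduct_comm]
    rfl
  have hDs (u : Fin 3 → F) : subplaneDual F f u s = -(k * g u) := by
    simp [g, hk0]
  have hφ : φ ≠ 0 := by
    refine (LinearEquiv.map_ne_zero_iff _).2 fun hu₀ => left_ne_zero h ?_
    rw [hk, hu₀, show algebraMap F K ∘ (0 : Fin 3 → F) = 0 from funext fun _ => map_zero _,
      map_zero, smul_zero]
  have hdisj : Disjoint (LinearMap.ker φ) (LinearMap.ker g) := by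
    refine Submodule.disjoint_def.2 fun u hφu hgu => by_contra fun hu => ?_
    refine dualLine_subplaneDual_ne_of_inter_eq_singleton hT u ?_
    rw [hlinf]
    apply dualLine_eq_projectiveClosure_univ (subplaneDual_ne_zero hu) h
    · rw [hDt, LinearMap.mem_ker.1 hφu, map_zero, mul_zero]
    · rw [hDs, LinearMap.mem_ker.1 hgu, mul_zero, neg_zero]
  obtain ⟨A, hA, hmem⟩ := exists_affineSubspace_forall_mem_iff_smul_eq hφ hdisj
  rw [Module.finrank_fin_fun] at hA
  refine ⟨A, by omega, ?_⟩
  rw [eq_projectiveClosure_preimage_chart h (fun X hX => hlinf.subset hX.1)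
    (mem_splash_of_mem_inter_linf htT)]
  congr 1
  ext z
  rw [Set.mem_preimage, mem_splash_iff, SetLike.mem_coe, hmem,
    and_iff_right (hlinf ▸ Set.mem_insert_of_mem _ ⟨z, Set.mem_univ z, rfl⟩)]
  refine exists_congr fun u => and_congr_right fun _ => ?_
  rw [chart_mem_dualLine, hDt, hDs, Algebra.smul_def, ← sub_eq_add_neg, sub_eq_zero,
    mul_left_comm, mul_right_inj' hk0, mul_comm]

lemma hmap_image_basePlane_inter_projectiveClosure_univ {e t s : Fin 3 → K}
    (h : LinearIndependent K ![t, s]) (hf : ∀ v, f v = v 0 • e + v 1 • t + v 2 • s) :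
    hmap f '' basePlane F K ∩ projectiveClosure h Set.univ =
      projectiveClosure h (Set.range (algebraMap F K)) := by
  have ht : mk K t (left_ne_zero h) ∈ hmap f '' basePlane F K :=
    mk_mem_hmap_image_basePlane.2 ⟨1, ![0, 1, 0], by simp [hf]⟩
  rw [eq_projectiveClosure_preimage_chart h Set.inter_subset_right ⟨ht, Set.mem_insert _ _⟩]
  congr 1
  ext z
  rw [Set.mem_preimage, Set.mem_inter_iff, chart_mem_projectiveClosure_iff,
    and_iff_left (Set.mem_univ z), chart, mk_mem_hmap_image_basePlane]
  constructor
  · rintro ⟨k, u, hu⟩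
    have hz : z • t + s = f ![0, z, 1] := by simp [hf]
    rw [hz, ← map_smul, f.injective.eq_iff] at hu
    have h1 : z = k * algebraMap F K (u 1) := congrFun hu 1
    have h2 : 1 = k * algebraMap F K (u 2) := congrFun hu 2
    have hu2 : algebraMap F K (u 2) ≠ 0 := right_ne_zero_of_mul (h2 ▸ one_ne_zero)
    exact ⟨u 1 / u 2, by rw [map_div₀, div_eq_iff hu2, h1, mul_right_comm, ← h2, one_mul]⟩
  · rintro ⟨r, rfl⟩
    exact ⟨1, ![0, r, 1], by simp [hf]⟩

lemma isSubline_projectiveClosure_range_algebraMap [Finite F] {t s : Fin 3 → K}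
    (h : LinearIndependent K ![t, s]) :
    IsSubline F (Nat.card F) (projectiveClosure h (Set.range (algebraMap F K))) := by
  obtain ⟨e, he⟩ := exists_linearIndependent_cons_of_lt_finrank h (by simp)
  let f : (Fin 3 → K) ≃ₗ[K] (Fin 3 → K) :=
    (basisOfLinearIndependentOfCardEqFinrank he (by simp)).equivFun.symm
  have hf (v : Fin 3 → K) : f v = v 0 • e + v 1 • t + v 2 • s := by
    simp [f, Module.Basis.equivFun_symm_apply, Fin.sum_univ_three]
  have hinter := hmap_image_basePlane_inter_projectiveClosure_univ (F := F) h hf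
  refine ⟨_, _, ⟨f, rfl⟩, isLine_projectiveClosure_univ h, ?_, hinter.symm⟩
  rw [hinter, ncard_projectiveClosure h (Set.finite_range _),
    Set.ncard_range_of_injective (algebraMap F K).injective]

lemma isSubline_projectiveClosure_line [Finite F] {t s : Fin 3 → K}
    (h : LinearIndependent K ![t, s]) {z₁ z₂ : K} (hz : z₁ ≠ z₂) :
    IsSubline F (Nat.card F) (projectiveClosure h line[F, z₁, z₂]) := by
  have hline : (line[F, z₁, z₂] : Set K) =
      AffineMap.lineMap (k := K) z₁ z₂ '' Set.range (algebraMap F K) := by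
    ext z
    rw [← Set.range_comp, SetLike.mem_coe, mem_affineSpan_pair_iff_exists_lineMap_eq]
    simp [AffineMap.lineMap_apply_module', Algebra.smul_def]
  rw [hline, projectiveClosure_image_lineMap h hz]
  exact isSubline_projectiveClosure_range_algebraMap _

end Subplanes

theorem statement13_general {F K : Type*} [Field F] [Field K] [Finite F] [Algebra F K]
    (q : ℕ) (hF : Nat.card F = q) (S S' : Set (PGPoint K)) (T : PGPoint K)
    (hS : IsTangentSplash F S T) (hS' : IsTangentSplash F S' T) (hne : S ≠ S') :
    (∃ b : Set (PGPoint K), IsSubline F q b ∧ b ⊆ linf K ∧ T ∈ b ∧ S ∩ S' ⊆ b) ∧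
    (S ∩ S').ncard ≤ q + 1 := by
  suffices h : ∃ b : Set (PGPoint K), IsSubline F q b ∧ b ⊆ linf K ∧ T ∈ b ∧ S ∩ S' ⊆ b by
    obtain ⟨b, hb, hbl, hTb, hSb⟩ := h
    have hcard : b.ncard = q + 1 := by
      obtain ⟨_, _, -, -, hcard, rfl⟩ := hb
      exact hcard
    exact ⟨⟨b, hb, hbl, hTb, hSb⟩,
      hcard ▸ Set.ncard_le_ncard hSb (Set.finite_of_ncard_pos (by omega))⟩
  induction T using ind with | h t ht =>
  have htl : mk K t ht ∈ linf K := by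
    obtain ⟨π, -, hT, -⟩ := hS
    exact (hT.superset rfl).2
  obtain ⟨s, h, hlinf⟩ := isLine_linf.exists_eq_projectiveClosure_univ htl
  obtain ⟨A, hA, rfl⟩ := hS.exists_affineSubspace h hlinf
  obtain ⟨A', hA', rfl⟩ := hS'.exists_affineSubspace h hlinf
  have hAA' : A ≠ A' := fun hAA' => hne (by rw [hAA'])
  obtain ⟨z₁, z₂, hz, hline⟩ := exists_ne_subset_line_of_collinear
    (collinear_inf_of_finrank_direction_eq_two hA hA' hAA')
  refine ⟨projectiveClosure h line[F, z₁, z₂], hF ▸ isSubline_projectiveClosure_line h hz,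
    hlinf ▸ projectiveClosure_mono h (Set.subset_univ _), Set.mem_insert _ _, ?_⟩
  rw [← projectiveClosure_inter]
  exact projectiveClosure_mono h hline

/-- two distinct tangent splashes with a common centre `T` meet in a
subset of an order-`q`-subline of `ℓ∞` through `T`; in particular they share at most
`q+1` points. -/
theorem statement13 (q : ℕ) (F K : Type) [Field F] [Field K] [Fintype F] [Fintype K]
    [Algebra F K] (hF : Fintype.card F = q) (hK : Fintype.card K = q ^ 3)
    (S S' : Set (PGPoint K)) (T : PGPoint K)
    (hS : IsTangentSplash F S T) (hS' : IsTangentSplash F S' T) (hne : S ≠ S') :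
    (∃ b : Set (PGPoint K), IsSubline F q b ∧ b ⊆ linf K ∧ T ∈ b ∧ S ∩ S' ⊆ b) ∧
    (S ∩ S').ncard ≤ q + 1 :=
  statement13_general q (Nat.card_eq_fintype_card.trans hF) S S' T hS hS' hne

end TangentSplashPaper
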